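/- AR_loc(K_4) = 7. That is, every proper edge coloring of the complete graph K_7 contains a rainbow copy of K_4, while the complete graph K_6 admits a proper edge coloring containing no rainbow copy of K_4. -/

import Mathlib

open SimpleGraph

/-- A proper edge coloring of `G`: adjacent (distinct, vertex-sharing) edges get
different colors. -/
def IsProperEdgeColoring {V : Type*} (G : SimpleGraph V) (c : Sym2 V → ℕ) : Prop :=
  ∀ e₁ ∈ G.edgeSet, ∀ e₂ ∈ G.edgeSet, e₁ ≠ e₂ → (∃ v, v ∈ e₁ ∧ v ∈ e₂) → c e₁ ≠ c e₂

/-- `G` contains a rainbow copy of `H` with respect to the edge coloring `c`: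
there is an injective graph homomorphism `H → G` whose image edges receive
pairwise distinct colors. -/
def HasRainbowCopy {V W : Type*} (G : SimpleGraph V) (H : SimpleGraph W) (c : Sym2 V → ℕ) : Prop :=
  ∃ f : H →g G, Function.Injective f ∧
    ∀ e₁ ∈ H.edgeSet, ∀ e₂ ∈ H.edgeSet, c (Sym2.map f e₁) = c (Sym2.map f e₂) → e₁ = e₂

/-- `G → H`: every proper edge coloring of `G` contains a rainbow copy of `H`. -/
def ArrowsTo {V W : Type*} (G : SimpleGraph V) (H : SimpleGraph W) : Prop :=
  ∀ c : Sym2 V → ℕ, IsProperEdgeColoring G c → HasRainbowCopy G H c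

/-- The size anti-Ramsey number: the minimum number of edges of a (finite) graph
`G` with `G → H`. -/
noncomputable def ARs {W : Type*} (H : SimpleGraph W) : ℕ :=
  sInf {m | ∃ (n : ℕ) (G : SimpleGraph (Fin n)), ArrowsTo G H ∧ G.edgeSet.ncard = m}

/-- The local anti-Ramsey number: the minimum `n` such that `K_n → H`. -/
noncomputable def ARloc {W : Type*} (H : SimpleGraph W) : ℕ :=
  sInf {n | ArrowsTo (⊤ : SimpleGraph (Fin n)) H}

/-!
Upper bound: count ordered pairs of distinct edges of the same color. Color classes are matchings,
so `K_7` has at most `21 * (3 - 1) = 42` such pairs, and each of them spans only one 4-set.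
If no `K_4` were rainbow, each of the 35 4-sets would contain a same-colored pair in both orders,
which requires 70 pairs.

Lower bound: for odd `n`, the vertices `ZMod n ∪ {∞}` of `K_{n+1}` admit the round-robin coloring
with `n` colors, in which `{a, b}` gets `a + b` and `{∞, a}` gets `2a`. For `n = 5` these are fewer
colors than a rainbow `K_4` needs.
-/

open Finset

section Containment

variable {V V' W : Type*} {G : SimpleGraph V} {G' : SimpleGraph V'} {H : SimpleGraph W}

lemma IsProperEdgeColoring.comp_copy {c : Sym2 V' → ℕ} (hc : IsProperEdgeColoring G' c)
    (f : Copy G G') : IsProperEdgeColoring G (c ∘ Sym2.map f) := by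
  rintro e₁ h₁ e₂ h₂ hne ⟨v, hv₁, hv₂⟩
  exact hc _ (f.toHom.map_mem_edgeSet h₁) _ (f.toHom.map_mem_edgeSet h₂)
    ((Sym2.map.injective f.injective).ne hne)
    ⟨f v, Sym2.mem_map.2 ⟨v, hv₁, rfl⟩, Sym2.mem_map.2 ⟨v, hv₂, rfl⟩⟩

lemma HasRainbowCopy.of_comp_copy {c : Sym2 V' → ℕ} (f : Copy G G')
    (h : HasRainbowCopy G H (c ∘ Sym2.map f)) : HasRainbowCopy G' H c := by
  obtain ⟨g, hg, hrainbow⟩ := h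
  refine ⟨f.toHom.comp g, f.injective.comp hg, fun e₁ h₁ e₂ h₂ heq ↦ hrainbow e₁ h₁ e₂ h₂ ?_⟩
  simpa only [Function.comp_apply, Sym2.map_map, Hom.coe_comp, Copy.coe_toHom] using heq

lemma ArrowsTo.of_isContained (hGG' : G ⊑ G') (h : ArrowsTo G H) : ArrowsTo G' H := by
  obtain ⟨f⟩ := hGG'
  exact fun c hc ↦ .of_comp_copy f (h _ (hc.comp_copy f))

lemma ArrowsTo.top_mono {m n : ℕ} (hmn : m ≤ n) (h : ArrowsTo (⊤ : SimpleGraph (Fin m)) H) :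
    ArrowsTo (⊤ : SimpleGraph (Fin n)) H :=
  h.of_isContained (isContained_top_iff.2 ⟨Fin.castLEEmb hmn⟩)

lemma ARloc_eq_succ {n : ℕ} (h : ArrowsTo (⊤ : SimpleGraph (Fin (n + 1))) H)
    (h' : ¬ ArrowsTo (⊤ : SimpleGraph (Fin n)) H) : ARloc H = n + 1 := by
  refine le_antisymm (Nat.sInf_le h) (le_csInf ⟨_, h⟩ fun m hm ↦ ?_)
  by_contra! hlt
  exact h' (hm.top_mono (Nat.le_of_lt_succ hlt))

end Containment

section UpperBound

lemma card_filter_powersetCard_subset_le {α : Type*} [DecidableEq α] {s t : Finset α} (hst : s ⊆ t)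
    (k : ℕ) : #{u ∈ powersetCard k t | s ⊆ u} ≤ (#t - #s).choose (k - #s) := by
  obtain hks | hsk := lt_or_ge k #s
  · rw [filter_false_of_mem fun u hu hsu ↦
      hks.not_ge ((card_le_card hsu).trans_eq (mem_powersetCard.1 hu).2), card_empty]
    exact Nat.zero_le _
  · exact (card_filter_powersetCard_subset s t k hst hsk).le

lemma card_cliqueFinset_top {V : Type*} [Fintype V] [DecidableEq V] (k : ℕ) :
    #((⊤ : SimpleGraph V).cliqueFinset k) = (Fintype.card V).choose k := by
  rw [← card_univ, ← card_powersetCard]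
  congr 1
  ext S
  simp only [mem_cliqueFinset_iff, isNClique_iff, IsClique.top, true_and, mem_powersetCard_univ]

variable {V : Type*} {G : SimpleGraph V} {c : Sym2 V → ℕ}

lemma IsProperEdgeColoring.disjoint_toFinset [DecidableEq V] (hc : IsProperEdgeColoring G c)
    {e₁ e₂ : Sym2 V} (h₁ : e₁ ∈ G.edgeSet) (h₂ : e₂ ∈ G.edgeSet) (hne : e₁ ≠ e₂)
    (heq : c e₁ = c e₂) : Disjoint e₁.toFinset e₂.toFinset :=
  Finset.disjoint_left.2 fun v hv₁ hv₂ ↦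
    hc e₁ h₁ e₂ h₂ hne ⟨v, Sym2.mem_toFinset.1 hv₁, Sym2.mem_toFinset.1 hv₂⟩ heq

lemma exists_color_eq_of_not_hasRainbowCopy [DecidableEq V] {k : ℕ}
    (h : ¬ HasRainbowCopy G (⊤ : SimpleGraph (Fin k)) c) {S : Finset V} (hS : G.IsNClique k S) :
    ∃ e₁ ∈ G.edgeSet, ∃ e₂ ∈ G.edgeSet, e₁ ≠ e₂ ∧ c e₁ = c e₂ ∧
      e₁.toFinset ⊆ S ∧ e₂.toFinset ⊆ S := by
  let i := (S.equivFinOfCardEq hS.card_eq).symm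
  have hi : Function.Injective (fun x ↦ (i x : V)) := Subtype.val_injective.comp i.injective
  let f : (⊤ : SimpleGraph (Fin k)) →g G :=
    ⟨fun x ↦ i x, fun hab ↦ hS.isClique (i _).2 (i _).2 (hi.ne hab)⟩
  have map_subset (e : Sym2 (Fin k)) : (e.map f).toFinset ⊆ S := fun v hv ↦ by
    obtain ⟨x, -, rfl⟩ := Sym2.mem_map.1 (Sym2.mem_toFinset.1 hv)
    exact (i x).2
  contrapose! h
  refine ⟨f, hi, fun e₁ h₁ e₂ h₂ heq ↦ ?_⟩
  by_contra hne
  exact h _ (f.map_mem_edgeSet h₁) _ (f.map_mem_edgeSet h₂) ((Sym2.map.injective hi).ne hne) heq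
    (map_subset e₁) (map_subset e₂)

variable [Fintype V] [DecidableRel G.Adj]

variable (G c) in
/-- The edges of `G` to which `c` gives the color `i`. -/
def edgeColorClass (i : ℕ) : Finset (Sym2 V) :=
  {e ∈ G.edgeFinset | c e = i}

lemma mem_edgeColorClass {i : ℕ} {e : Sym2 V} :
    e ∈ edgeColorClass G c i ↔ e ∈ G.edgeSet ∧ c e = i := by
  rw [edgeColorClass, mem_filter, mem_edgeFinset]

variable (G c) in
/-- The ordered pairs of distinct edges of `G` to which `c` gives the same color. -/
def sameColorPairs : Finset (Sym2 V × Sym2 V) :=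
  {p ∈ G.edgeFinset.offDiag | c p.1 = c p.2}

lemma mem_sameColorPairs {e₁ e₂ : Sym2 V} : (e₁, e₂) ∈ sameColorPairs G c ↔
    e₁ ∈ G.edgeSet ∧ e₂ ∈ G.edgeSet ∧ e₁ ≠ e₂ ∧ c e₁ = c e₂ := by
  simp only [sameColorPairs, mem_filter, mem_offDiag, mem_edgeFinset, and_assoc]

lemma IsProperEdgeColoring.two_mul_card_edgeColorClass_le (hc : IsProperEdgeColoring G c) (i : ℕ) :
    2 * #(edgeColorClass G c i) ≤ Fintype.card V := by
  classical
  have hdisj : (edgeColorClass G c i : Set (Sym2 V)).PairwiseDisjoint Sym2.toFinset :=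
    fun e₁ h₁ e₂ h₂ hne ↦ by
      obtain ⟨he₁, hi₁⟩ := mem_edgeColorClass.1 h₁
      obtain ⟨he₂, hi₂⟩ := mem_edgeColorClass.1 h₂
      exact hc.disjoint_toFinset he₁ he₂ hne (hi₁.trans hi₂.symm)
  have hcard : ∀ e ∈ edgeColorClass G c i, #e.toFinset = 2 := fun e he ↦
    Sym2.card_toFinset_of_not_isDiag _ (G.not_isDiag_of_mem_edgeSet (mem_edgeColorClass.1 he).1)
  rw [mul_comm, ← sum_const_nat hcard, ← card_biUnion hdisj]
  exact card_le_univ _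

lemma IsProperEdgeColoring.card_sameColorPairs_le (hc : IsProperEdgeColoring G c) :
    #(sameColorPairs G c) ≤ #G.edgeFinset * (Fintype.card V / 2 - 1) := by
  classical
  rw [mul_comm]
  refine card_le_mul_card_image_of_maps_to (f := Prod.fst)
    (fun p hp ↦ mem_edgeFinset.2 (mem_sameColorPairs.1 hp).1) _ fun e he ↦ ?_
  calc #{p ∈ sameColorPairs G c | p.1 = e}
      ≤ #((edgeColorClass G c (c e)).erase e) := by
        refine card_le_card_of_injOn Prod.snd (fun p hp ↦ ?_) fun p hp q hq hpq ↦
          Prod.ext ((mem_filter.1 hp).2.trans (mem_filter.1 hq).2.symm) hpq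
        obtain ⟨hpair, rfl⟩ := mem_filter.1 hp
        obtain ⟨-, h₂, hne, heq⟩ := mem_sameColorPairs.1 hpair
        exact mem_erase.2 ⟨hne.symm, mem_edgeColorClass.2 ⟨h₂, heq.symm⟩⟩
    _ = #(edgeColorClass G c (c e)) - 1 :=
        card_erase_of_mem (mem_edgeColorClass.2 ⟨mem_edgeFinset.1 he, rfl⟩)
    _ ≤ Fintype.card V / 2 - 1 := by
        have := hc.two_mul_card_edgeColorClass_le (c e)
        omega

variable [DecidableEq V]

lemma IsProperEdgeColoring.card_filter_cliqueFinset_le (hc : IsProperEdgeColoring G c) (k : ℕ)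
    {e₁ e₂ : Sym2 V} (he : (e₁, e₂) ∈ sameColorPairs G c) :
    #{S ∈ G.cliqueFinset k | e₁.toFinset ⊆ S ∧ e₂.toFinset ⊆ S} ≤
      (Fintype.card V - 4).choose (k - 4) := by
  obtain ⟨h₁, h₂, hne, heq⟩ := mem_sameColorPairs.1 he
  have hcard : #(e₁.toFinset ∪ e₂.toFinset) = 4 := by
    rw [card_union_of_disjoint (hc.disjoint_toFinset h₁ h₂ hne heq),
      Sym2.card_toFinset_of_not_isDiag _ (G.not_isDiag_of_mem_edgeSet h₁),
      Sym2.card_toFinset_of_not_isDiag _ (G.not_isDiag_of_mem_edgeSet h₂)]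
  calc #{S ∈ G.cliqueFinset k | e₁.toFinset ⊆ S ∧ e₂.toFinset ⊆ S}
      ≤ #{S ∈ powersetCard k univ | e₁.toFinset ∪ e₂.toFinset ⊆ S} := by
        refine card_le_card fun S hS ↦ ?_
        obtain ⟨hclique, h₁S, h₂S⟩ := mem_filter.1 hS
        exact mem_filter.2 ⟨mem_powersetCard_univ.2 (mem_cliqueFinset_iff.1 hclique).card_eq,
          union_subset h₁S h₂S⟩
    _ ≤ (Fintype.card V - 4).choose (k - 4) := by
        simpa only [hcard, card_univ] using
          card_filter_powersetCard_subset_le (subset_univ (e₁.toFinset ∪ e₂.toFinset)) k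

lemma IsProperEdgeColoring.card_cliqueFinset_mul_two_le (hc : IsProperEdgeColoring G c) {k : ℕ}
    (h : ¬ HasRainbowCopy G (⊤ : SimpleGraph (Fin k)) c) :
    #(G.cliqueFinset k) * 2 ≤ #(sameColorPairs G c) * (Fintype.card V - 4).choose (k - 4) := by
  refine card_mul_le_card_mul (fun S (p : Sym2 V × Sym2 V) ↦ p.1.toFinset ⊆ S ∧ p.2.toFinset ⊆ S)
    (fun S hS ↦ ?_) fun p hp ↦ hc.card_filter_cliqueFinset_le k hp
  obtain ⟨e₁, h₁, e₂, h₂, hne, heq, h₁S, h₂S⟩ :=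
    exists_color_eq_of_not_hasRainbowCopy h (mem_cliqueFinset_iff.1 hS)
  rw [← card_pair (a := (e₁, e₂)) (b := (e₂, e₁)) fun h ↦ hne (congrArg Prod.fst h)]
  refine card_le_card (insert_subset ?_ (singleton_subset_iff.2 ?_))
  · exact mem_filter.2 ⟨mem_sameColorPairs.2 ⟨h₁, h₂, hne, heq⟩, h₁S, h₂S⟩
  · exact mem_filter.2 ⟨mem_sameColorPairs.2 ⟨h₂, h₁, hne.symm, heq.symm⟩, h₂S, h₁S⟩

theorem arrowsTo_top_of_lt_card_cliqueFinset {k : ℕ}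
    (h : #G.edgeFinset * (Fintype.card V / 2 - 1) * (Fintype.card V - 4).choose (k - 4) <
      #(G.cliqueFinset k) * 2) :
    ArrowsTo G (⊤ : SimpleGraph (Fin k)) := by
  intro c hc
  by_contra hno
  refine h.not_ge ((hc.card_cliqueFinset_mul_two_le hno).trans ?_)
  gcongr
  exact hc.card_sameColorPairs_le

end UpperBound

section LowerBound

lemma HasRainbowCopy.ncard_edgeSet_le {V W : Type*} {G : SimpleGraph V} {H : SimpleGraph W}
    {c : Sym2 V → ℕ} (h : HasRainbowCopy G H c) {C : Finset ℕ} (hC : ∀ e ∈ G.edgeSet, c e ∈ C) :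
    H.edgeSet.ncard ≤ #C := by
  obtain ⟨f, -, hrainbow⟩ := h
  rw [← Set.ncard_coe_finset]
  exact Set.ncard_le_ncard_of_injOn (fun e ↦ c (e.map f))
    (fun e he ↦ hC _ (f.map_mem_edgeSet he)) fun e₁ h₁ e₂ h₂ ↦ hrainbow e₁ h₁ e₂ h₂

variable {A : Type*} [AddCommGroup A]

/-- The round-robin edge coloring of the complete graph on `A ∪ {∞}`, where `∞` is `none`:
`{a, b}` gets the color `a + b` and `{∞, a}` the color `a + a`. -/
def roundRobinColor : Sym2 (Option A) → A :=
  Sym2.lift ⟨fun x y ↦ x.getD (y.getD 0) + y.getD (x.getD 0), fun _ _ ↦ add_comm _ _⟩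

lemma roundRobinColor_injective_right (hA : Function.Injective fun a : A ↦ a + a)
    {v x y : Option A} (hx : v ≠ x) (hy : v ≠ y)
    (h : roundRobinColor s(v, x) = roundRobinColor s(v, y)) : x = y := by
  -- At `v = ∞` this is injectivity of doubling; elsewhere `{v, ∞}` gets `v + v`, so `v` cancels.
  rcases v with _ | v <;> rcases x with _ | x <;> rcases y with _ | y <;>
    simp_all [roundRobinColor, hA.eq_iff]

lemma isProperEdgeColoring_roundRobinColor (hA : Function.Injective fun a : A ↦ a + a)
    {g : A → ℕ} (hg : Function.Injective g) :
    IsProperEdgeColoring (⊤ : SimpleGraph (Option A)) (g ∘ roundRobinColor) := by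
  rintro _ h₁ _ h₂ hne ⟨v, ⟨x, rfl⟩, ⟨y, rfl⟩⟩ heq
  exact hne (congrArg _ (roundRobinColor_injective_right hA h₁ h₂ (hg heq)))

lemma not_arrowsTo_top_option [Finite A] (hA : Function.Injective fun a : A ↦ a + a) {W : Type*}
    {H : SimpleGraph W} (hH : Nat.card A < H.edgeSet.ncard) :
    ¬ ArrowsTo (⊤ : SimpleGraph (Option A)) H := by
  intro h
  let g : A → ℕ := fun a ↦ Finite.equivFin A a
  have hg : Function.Injective g := Fin.val_injective.comp (Finite.equivFin A).injective
  have hrainbow := h _ (isProperEdgeColoring_roundRobinColor hA hg)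
  refine hH.not_ge ((hrainbow.ncard_edgeSet_le (C := range (Nat.card A)) ?_).trans_eq
    (card_range _))
  exact fun e _ ↦ mem_range.2 (Finite.equivFin A (roundRobinColor e)).2

theorem not_arrowsTo_top_fin_succ_of_odd {n : ℕ} (hn : Odd n) {W : Type*} {H : SimpleGraph W}
    (hH : n < H.edgeSet.ncard) : ¬ ArrowsTo (⊤ : SimpleGraph (Fin (n + 1))) H := by
  have : NeZero n := ⟨hn.pos.ne'⟩
  have add_self_injective : Function.Injective fun a : ZMod n ↦ a + a := fun a b hab ↦ by
    rw [← sub_eq_zero, ← ZMod.add_self_eq_zero_iff_eq_zero hn, ← add_sub_add_comm]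
    exact sub_eq_zero.2 hab
  have e : Fin (n + 1) ≃ Option (ZMod n) :=
    Fintype.equivOfCardEq (by simp [ZMod.card])
  intro h
  exact not_arrowsTo_top_option add_self_injective (by simpa using hH)
    (h.of_isContained (isContained_top_iff.2 ⟨e.toEmbedding⟩))

end LowerBound

theorem stmt_2 :
    ARloc (⊤ : SimpleGraph (Fin 4)) = 7 ∧
    ArrowsTo (⊤ : SimpleGraph (Fin 7)) (⊤ : SimpleGraph (Fin 4)) ∧
    ¬ ArrowsTo (⊤ : SimpleGraph (Fin 6)) (⊤ : SimpleGraph (Fin 4)) := by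
  have upper : ArrowsTo (⊤ : SimpleGraph (Fin 7)) (⊤ : SimpleGraph (Fin 4)) := by
    apply arrowsTo_top_of_lt_card_cliqueFinset
    rw [card_edgeFinset_top_eq_card_choose_two, card_cliqueFinset_top, Fintype.card_fin]
    decide
  have card_edges : (⊤ : SimpleGraph (Fin 4)).edgeSet.ncard = 6 := by
    rw [← coe_edgeFinset, Set.ncard_coe_finset, card_edgeFinset_top_eq_card_choose_two]
    rfl
  have lower : ¬ ArrowsTo (⊤ : SimpleGraph (Fin 6)) (⊤ : SimpleGraph (Fin 4)) :=
    not_arrowsTo_top_fin_succ_of_odd (n := 5) (by decide) (by rw [card_edges]; decide)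
  exact ⟨ARloc_eq_succ upper lower, upper, lower⟩
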